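/- Let F : {(x,v) : x ∈ S^{d-1}, v ∈ S_x^{d-2}} → ℝ be integrable with respect to the Liouville measure L (defined by L(A) = ∫_{S^{d-1}} ∫_{S_x^{d-2}} 1_A(x,v) μ_x(dv) σ_{d-1}(dx)). Then for every θ ∈ ℝ one has ∫_{S^{d-1}} ∫_{S_x^{d-2}} F(x,v) μ_x(dv) σ_{d-1}(dx) = ∫_{S^{d-1}} ∫_{S_x^{d-2}} F(T_θ(x,v)) μ_x(dv) σ_{d-1}(dx). -/

import Mathlib

/-!
The Liouville measure `L` is finite and invariant under the diagonal action of the orthogonal group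
`O(d)` on pairs `(x, v)`. The map `T_θ` commutes with this action and preserves every orbit of
orthonormal pairs: on such a pair, `T_θ` is the reflection in the hyperplane orthogonal to
`sin (θ/2) x - cos (θ/2) v` (`exists_isometry_eq_Tmap`). Let `ν` be a Haar measure on the compact
group `O(d)` and put `A_f(p) = ∫ f(g⁻¹ p) ν(dg)`. Invariance of `L` and Tonelli's theorem give
`∫ A_f dL = ν(O(d)) ∫ f dL`. If `T_θ p = k p` with `k ∈ O(d)`, then left invariance of `ν` gives
`A_{f ∘ T_θ}(p) = ∫ f(g⁻¹ k p) ν(dg) = A_f(p)`. Comparing total integrals, `∫ f ∘ T_θ dL = ∫ f dL`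
(`lintegral_liouville_Tmap`).

For `L` to be given by its iterated integral, the kernel `x ↦ μ_x` must be measurable in `x` and the
measures finite. Measurability comes from Householder reflections: for a fixed pole `e`, the
reflection exchanging `e` and `x` depends measurably on `x` and carries `μ_e` to `μ_x`, so `L` is the
image of `σ ⊗ μ_e` under an explicit measurable map (`liouville_eq_map`). Finiteness of the Hausdorff
measure of a sphere follows from stereographic projection (`hausdorffMeasure_sphere_lt_top`).
-/

open MeasureTheory Real ProbabilityTheory
open scoped RealInnerProductSpace ENNReal NNReal

noncomputable section

/-- Euclidean space `ℝ^d`. -/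
abbrev E (d : ℕ) : Type := EuclideanSpace ℝ (Fin d)

/-- The unit sphere `S^{d-1} ⊆ ℝ^d`. -/
def sph (d : ℕ) : Set (E d) := Metric.sphere 0 1

/-- The great subsphere `S_x^{d-2}` with pole `x`. -/
def subsph (d : ℕ) (x : E d) : Set (E d) := {v | v ∈ sph d ∧ ⟪v, x⟫ = 0}

/-- The great circle (geodesic) `γ_{(x,v)}(θ) = cos θ • x + sin θ • v`. -/
def geo {d : ℕ} (x v : E d) (θ : ℝ) : E d := Real.cos θ • x + Real.sin θ • v

/-- The canonical volume measure `σ_{d-1}` on the sphere: the `(d-1)`-dimensional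
Hausdorff measure restricted to `S^{d-1}`. -/
def sphMeasure (d : ℕ) : Measure (E d) := (μH[(d:ℝ) - 1]).restrict (sph d)

/-- `ω_{d-2}`, the total volume of a `(d-2)`-dimensional unit sphere. -/
def omegaSub (d : ℕ) : ℝ≥0∞ :=
  μH[(d:ℝ) - 2] (Metric.sphere (0 : EuclideanSpace ℝ (Fin (d - 1))) 1)

/-- The geodesic level set `L(x,v,t) = {θ ∈ [0,2π) : p(γ_{(x,v)}(θ)) > t}`. -/
def lvl {d : ℕ} (p : E d → ℝ) (x v : E d) (t : ℝ) : Set ℝ :=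
  {θ | θ ∈ Set.Ico 0 (2 * π) ∧ t < p (geo x v θ)}

/-- The map `T_θ(x,v) = (cos θ x + sin θ v, sin θ x − cos θ v)`. -/
def Tmap {d : ℕ} (θ : ℝ) (x v : E d) : E d × E d :=
  (Real.cos θ • x + Real.sin θ • v, Real.sin θ • x - Real.cos θ • v)
/-- The Liouville measure on `{(x,v) : x ∈ S^{d-1}, v ∈ S_x^{d-2}}`, viewed as a measure
on `ℝ^d × ℝ^d`:  `L(A) = ∫_{S^{d-1}} ∫_{S_x^{d-2}} 1_A(x,v) μ_x(dv) σ_{d-1}(dx)`. -/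
def liouville (d : ℕ) : Measure (E d × E d) :=
  (sphMeasure d).bind fun x => ((μH[(d:ℝ) - 2]).restrict (subsph d x)).map fun v => (x, v)

/-! ### Finiteness of the Hausdorff measures of spheres -/

/-- The unit sphere of an `(n+1)`-dimensional Euclidean space has finite `n`-dimensional Hausdorff
measure: each closed hemisphere is the image of a bounded subset of an `n`-dimensional space under
inverse stereographic projection, which is smooth and hence Lipschitz on bounded sets. -/
theorem hausdorffMeasure_sphere_lt_top {V : Type*} [NormedAddCommGroup V] [InnerProductSpace ℝ V]
    [FiniteDimensional ℝ V] [MeasurableSpace V] [BorelSpace V] {n : ℕ}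
    (hn : Module.finrank ℝ V = n + 1) : μH[(n : ℝ)] (Metric.sphere (0 : V) 1) < ∞ := by
  have hemi : ∀ v : V, ‖v‖ = 1 →
      μH[(n : ℝ)] (Metric.sphere (0 : V) 1 ∩ {x | ⟪v, x⟫ ≤ 0}) < ∞ := by
    intro v hv
    have hv0 : v ≠ 0 := by rintro rfl; simp at hv
    have hfin : Module.finrank ℝ (ℝ ∙ v)ᗮ = n := by
      have : Fact (Module.finrank ℝ V = n + 1) := ⟨hn⟩
      exact Submodule.finrank_orthogonal_span_singleton hv0
    let f : (ℝ ∙ v)ᗮ → V := fun w => stereoInvFunAux v (w : V)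
    have hf : LocallyLipschitz f :=
      ((contDiff_stereoInvFunAux (v := v) (m := 1)).comp
        (ℝ ∙ v)ᗮ.subtypeL.contDiff).locallyLipschitz
    have hK : IsCompact (Metric.closedBall (0 : (ℝ ∙ v)ᗮ) 2) := isCompact_closedBall _ _
    obtain ⟨K, hK'⟩ := (hf.locallyLipschitzOn (s := Metric.closedBall (0 : (ℝ ∙ v)ᗮ) 2)
      ).exists_lipschitzOnWith_of_compact hK
    have hsub : Metric.sphere (0 : V) 1 ∩ {x | ⟪v, x⟫ ≤ 0} ⊆
        f '' Metric.closedBall (0 : (ℝ ∙ v)ᗮ) 2 := by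
      rintro x ⟨hx, hxv⟩
      have hxv' : ⟪v, x⟫ ≤ 0 := hxv
      have hxn : ‖x‖ = 1 := by simpa using hx
      refine ⟨stereoToFun v x, ?_, ?_⟩
      · rw [mem_closedBall_zero_iff, stereoToFun_apply, norm_smul]
        have h1 : ‖(ℝ ∙ v)ᗮ.orthogonalProjectionOnto x‖ ≤ 1 :=
          hxn ▸ Submodule.norm_orthogonalProjectionOnto_apply_le _ x
        have h2 : ‖2 / ((1 : ℝ) - innerSL ℝ v x)‖ ≤ 2 := by
          simp only [innerSL_apply_apply]
          rw [Real.norm_eq_abs, abs_of_nonneg (by apply div_nonneg <;> linarith),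
            div_le_iff₀ (by linarith)]
          linarith
        nlinarith [norm_nonneg ((ℝ ∙ v)ᗮ.orthogonalProjectionOnto x),
          norm_nonneg (2 / ((1 : ℝ) - innerSL ℝ v x))]
      · have hne : ((⟨x, hx⟩ : Metric.sphere (0 : V) 1) : V) ≠ v := by
          rintro h
          have h' : x = v := h
          rw [h', real_inner_self_eq_norm_sq, hv] at hxv'
          norm_num at hxv'
        exact congrArg Subtype.val (stereo_left_inv hv hne)
    refine (measure_mono hsub).trans_lt
      ((hK'.hausdorffMeasure_image_le (Nat.cast_nonneg n)).trans_lt ?_)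
    refine ENNReal.mul_lt_top (ENNReal.rpow_lt_top_of_nonneg (by positivity) (by simp)) ?_
    rw [← hfin]
    exact hK.measure_lt_top
  obtain ⟨v, hv⟩ : ∃ v : V, ‖v‖ = 1 := by
    have : Nontrivial V := Module.nontrivial_of_finrank_pos (R := ℝ) (by omega)
    exact exists_norm_eq V zero_le_one
  have hcov : Metric.sphere (0 : V) 1 ⊆
      (Metric.sphere (0 : V) 1 ∩ {x | ⟪v, x⟫ ≤ 0}) ∪
        (Metric.sphere (0 : V) 1 ∩ {x | ⟪-v, x⟫ ≤ 0}) := by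
    intro x hx
    rcases le_total ⟪v, x⟫ 0 with h | h
    · exact Or.inl ⟨hx, h⟩
    · exact Or.inr ⟨hx, by simpa using h⟩
  exact (measure_mono hcov).trans_lt
    (measure_union_lt_top (hemi v hv) (hemi (-v) (by simpa using hv)))

instance isFiniteMeasure_sphMeasure {d : ℕ} [NeZero d] : IsFiniteMeasure (sphMeasure d) := by
  refine ⟨?_⟩
  obtain ⟨n, rfl⟩ := Nat.exists_eq_succ_of_ne_zero (NeZero.ne d)
  rw [sphMeasure, Measure.restrict_apply_univ]
  simpa [sph] using hausdorffMeasure_sphere_lt_top (V := E (n + 1)) (n := n) (by simp)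

theorem hausdorffMeasure_subsph_lt_top {d : ℕ} (hd : 2 ≤ d) {x : E d} (hx : x ∈ sph d) :
    μH[(d : ℝ) - 2] (subsph d x) < ∞ := by
  obtain ⟨n, rfl⟩ := Nat.exists_eq_add_of_le' hd
  have hx0 : x ≠ 0 := by rintro rfl; simp [sph] at hx
  have hfin : Module.finrank ℝ (ℝ ∙ x)ᗮ = n + 1 := by
    have : Fact (Module.finrank ℝ (E (n + 2)) = (n + 1) + 1) := ⟨by simp⟩
    exact Submodule.finrank_orthogonal_span_singleton hx0
  have himg : subsph (n + 2) x =
      (fun w : (ℝ ∙ x)ᗮ => (w : E (n + 2))) '' Metric.sphere 0 1 := by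
    ext v
    simp only [subsph, sph, Set.mem_ofPred_eq, Set.mem_image, mem_sphere_zero_iff_norm,
      Subtype.exists, Submodule.mem_orthogonal_singleton_iff_inner_left]
    constructor
    · rintro ⟨h1, h2⟩
      exact ⟨v, h2, h1, rfl⟩
    · rintro ⟨w, h2, h1, rfl⟩
      exact ⟨h1, h2⟩
  have hcast : ((n + 2 : ℕ) : ℝ) - 2 = n := by push_cast; ring
  rw [hcast, himg, Isometry.hausdorffMeasure_image isometry_subtype_coe
    (Or.inl (Nat.cast_nonneg n))]
  exact hausdorffMeasure_sphere_lt_top hfin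

/-! ### The Liouville measure as the image of a product measure -/

theorem measurableSet_sph (d : ℕ) : MeasurableSet (sph d) :=
  Metric.isClosed_sphere.measurableSet

theorem measurableSet_subsph (d : ℕ) (x : E d) : MeasurableSet (subsph d x) :=
  (measurableSet_sph d).inter
    (isClosed_eq (continuous_id.inner continuous_const) continuous_const).measurableSet

theorem isometry_preimage_sph {d : ℕ} (g : E d ≃ₗᵢ[ℝ] E d) : g ⁻¹' sph d = sph d := by
  ext x; simp [sph]

theorem isometry_preimage_subsph {d : ℕ} (g : E d ≃ₗᵢ[ℝ] E d) (x : E d) :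
    g ⁻¹' subsph d (g x) = subsph d x := by
  ext v; simp [subsph, sph]

theorem measurePreserving_sphMeasure {d : ℕ} (g : E d ≃ₗᵢ[ℝ] E d) :
    MeasurePreserving g (sphMeasure d) (sphMeasure d) := by
  have h := (g.toIsometryEquiv.measurePreserving_hausdorffMeasure ((d : ℝ) - 1)).restrict_preimage
    (measurableSet_sph d)
  have h' : (g.toIsometryEquiv : E d → E d) ⁻¹' sph d = sph d := isometry_preimage_sph g
  rwa [h'] at h

theorem measurePreserving_subsph {d : ℕ} (g : E d ≃ₗᵢ[ℝ] E d) (x : E d) :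
    MeasurePreserving g ((μH[(d : ℝ) - 2]).restrict (subsph d x))
      ((μH[(d : ℝ) - 2]).restrict (subsph d (g x))) := by
  have h := (g.toIsometryEquiv.measurePreserving_hausdorffMeasure ((d : ℝ) - 2)).restrict_preimage
    (measurableSet_subsph d (g x))
  have h' : (g.toIsometryEquiv : E d → E d) ⁻¹' subsph d (g x) = subsph d x :=
    isometry_preimage_subsph g x
  rwa [h'] at h

theorem measurableEmbedding_isometry {d : ℕ} (g : E d ≃ₗᵢ[ℝ] E d) : MeasurableEmbedding g :=
  g.toHomeomorph.measurableEmbedding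

/-- The Householder reflection exchanging the unit vectors `e` and `x`. It is the identity when
`x = e`, the mirror hyperplane then degenerating to the whole space. -/
def house {d : ℕ} (e x : E d) : E d ≃ₗᵢ[ℝ] E d := (ℝ ∙ (e - x))ᗮ.reflection

theorem house_apply {d : ℕ} (e x v : E d) :
    house e x v = v - (2 * (⟪e - x, v⟫ / ‖e - x‖ ^ 2)) • (e - x) := by
  rw [house, Submodule.reflection_orthogonal_apply, Submodule.reflection_singleton_apply]
  simp only [RCLike.ofReal_real_eq_id, id_eq, neg_sub, ← smul_assoc, nsmul_eq_mul, Nat.cast_ofNat]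

theorem house_self {d : ℕ} {e x : E d} (he : e ∈ sph d) (hx : x ∈ sph d) : house e x e = x :=
  Submodule.reflection_sub (by simp_all [sph])

/-- The parametrisation `(x, v) ↦ (x, house e x v)` of the unit tangent bundle of the sphere by
`S^{d-1} × S_e^{d-2}`. -/
def stiefelMap {d : ℕ} (e : E d) (p : E d × E d) : E d × E d := (p.1, house e p.1 p.2)

theorem measurable_stiefelMap {d : ℕ} (e : E d) : Measurable (stiefelMap e) := by
  unfold stiefelMap
  simp only [house_apply]
  fun_prop

/-- The Liouville measure is the image of `σ ⊗ μ_e` under `stiefelMap e`. In particular the kernel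
defining `liouville d` is almost everywhere equal to a measurable one, so that `Measure.bind` does
not take its junk value. -/
theorem liouville_eq_map {d : ℕ} (hd : 2 ≤ d) {e : E d} (he : e ∈ sph d) :
    liouville d =
      ((sphMeasure d).prod ((μH[(d : ℝ) - 2]).restrict (subsph d e))).map (stiefelMap e) := by
  have : Fact (μH[(d : ℝ) - 2] (subsph d e) < ∞) := ⟨hausdorffMeasure_subsph_lt_top hd he⟩
  set ν := (μH[(d : ℝ) - 2]).restrict (subsph d e) with hν
  have hcongr : (fun x => ((μH[(d : ℝ) - 2]).restrict (subsph d x)).map fun v => (x, v))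
      =ᵐ[sphMeasure d] fun x => ν.map fun v => stiefelMap e (x, v) := by
    filter_upwards [ae_restrict_mem (measurableSet_sph d)] with x hx
    have h := (measurePreserving_subsph (house e x) e).map_eq
    rw [house_self he hx] at h
    rw [← h, Measure.map_map (by fun_prop) (house e x).continuous.measurable]
    rfl
  have hmeas (x : E d) : Measurable fun v : E d => stiefelMap e (x, v) :=
    (measurable_stiefelMap e).comp measurable_prodMk_left
  have hker : Measurable fun x => ν.map fun v => stiefelMap e (x, v) := by
    refine Measure.measurable_of_measurable_coe _ fun s hs => ?_
    simp only [Measure.map_apply (hmeas _) hs]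
    exact measurable_measure_prodMk_left (measurable_stiefelMap e hs)
  rw [liouville, Measure.bind_congr_right hcongr]
  ext s hs
  rw [Measure.bind_apply hs hker.aemeasurable, Measure.map_apply (measurable_stiefelMap e) hs,
    Measure.prod_apply (measurable_stiefelMap e hs)]
  simp only [Measure.map_apply (hmeas _) hs]
  rfl

theorem exists_mem_sph {d : ℕ} (hd : 2 ≤ d) : ∃ e : E d, e ∈ sph d := by
  have : NeZero d := ⟨by omega⟩
  obtain ⟨e, he⟩ := exists_norm_eq (E d) zero_le_one
  exact ⟨e, by simpa [sph] using he⟩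

theorem isFiniteMeasure_liouville {d : ℕ} (hd : 2 ≤ d) : IsFiniteMeasure (liouville d) := by
  obtain ⟨e, he⟩ := exists_mem_sph hd
  have : NeZero d := ⟨by omega⟩
  have : Fact (μH[(d : ℝ) - 2] (subsph d e) < ∞) := ⟨hausdorffMeasure_subsph_lt_top hd he⟩
  rw [liouville_eq_map hd he]
  infer_instance

theorem lintegral_liouville {d : ℕ} (hd : 2 ≤ d) {f : E d × E d → ℝ≥0∞} (hf : Measurable f) :
    ∫⁻ p, f p ∂liouville d =
      ∫⁻ x, (∫⁻ v in subsph d x, f (x, v) ∂μH[(d : ℝ) - 2]) ∂sphMeasure d := by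
  obtain ⟨e, he⟩ := exists_mem_sph hd
  have : Fact (μH[(d : ℝ) - 2] (subsph d e) < ∞) := ⟨hausdorffMeasure_subsph_lt_top hd he⟩
  rw [liouville_eq_map hd he, lintegral_map hf (measurable_stiefelMap e),
    lintegral_prod (fun p => f (stiefelMap e p)) (hf.comp (measurable_stiefelMap e)).aemeasurable]
  refine setLIntegral_congr_fun (measurableSet_sph d) fun x hx => ?_
  have h := measurePreserving_subsph (house e x) e
  rw [house_self he hx] at h
  exact h.lintegral_comp_emb (measurableEmbedding_isometry _) fun v => f (x, v)

/-- Fubini's theorem for the Liouville measure. -/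
theorem integral_liouville {d : ℕ} (hd : 2 ≤ d) {f : E d × E d → ℝ}
    (hf : Integrable f (liouville d)) :
    ∫ p, f p ∂liouville d =
      ∫ x, (∫ v in subsph d x, f (x, v) ∂μH[(d : ℝ) - 2]) ∂sphMeasure d := by
  obtain ⟨e, he⟩ := exists_mem_sph hd
  have : NeZero d := ⟨by omega⟩
  have : Fact (μH[(d : ℝ) - 2] (subsph d e) < ∞) := ⟨hausdorffMeasure_subsph_lt_top hd he⟩
  rw [liouville_eq_map hd he] at hf ⊢
  rw [integral_map (measurable_stiefelMap e).aemeasurable hf.aestronglyMeasurable,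
    integral_prod (fun p => f (stiefelMap e p)) (hf.comp_measurable (measurable_stiefelMap e))]
  refine setIntegral_congr_fun (measurableSet_sph d) fun x hx => ?_
  have h := measurePreserving_subsph (house e x) e
  rw [house_self he hx] at h
  exact h.integral_comp (measurableEmbedding_isometry _) fun v => f (x, v)

/-! ### Invariance under the orthogonal group and under `T_θ` -/

/-- Invariance of the Liouville measure under the diagonal action of a linear isometry. -/
theorem lintegral_liouville_isometry {d : ℕ} (hd : 2 ≤ d) (g : E d ≃ₗᵢ[ℝ] E d)
    {f : E d × E d → ℝ≥0∞} (hf : Measurable f) :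
    ∫⁻ p, f (g p.1, g p.2) ∂liouville d = ∫⁻ p, f p ∂liouville d := by
  have hg : Measurable fun p : E d × E d => (g p.1, g p.2) :=
    (Continuous.prodMk (g.continuous.comp continuous_fst)
      (g.continuous.comp continuous_snd)).measurable
  rw [lintegral_liouville hd hf, lintegral_liouville hd (f := fun p => f (g p.1, g p.2)) (hf.comp hg)]
  have h1 : ∀ x : E d, ∫⁻ v in subsph d x, f (g x, g v) ∂μH[(d : ℝ) - 2] =
      ∫⁻ v in subsph d (g x), f (g x, v) ∂μH[(d : ℝ) - 2] := fun x =>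
    (measurePreserving_subsph g x).lintegral_comp_emb (measurableEmbedding_isometry g)
      fun v => f (g x, v)
  simp only [h1]
  exact (measurePreserving_sphMeasure g).lintegral_comp_emb (measurableEmbedding_isometry g)
    fun x => ∫⁻ v in subsph d x, f (x, v) ∂μH[(d : ℝ) - 2]

/-- On an orthonormal pair `(x, v)`, the map `T_θ` acts as the reflection in the hyperplane
orthogonal to the unit vector `sin (θ/2) x - cos (θ/2) v`. -/
theorem exists_isometry_eq_Tmap {d : ℕ} (θ : ℝ) {x v : E d} (hx : x ∈ sph d)
    (hv : v ∈ subsph d x) :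
    ∃ g : E d ≃ₗᵢ[ℝ] E d, Tmap θ x v = (g x, g v) := by
  obtain ⟨hv1, hvx⟩ := hv
  have hxx : ⟪x, x⟫ = 1 := by
    rw [real_inner_self_eq_norm_sq]; simp_all [sph]
  have hvv : ⟪v, v⟫ = 1 := by
    rw [real_inner_self_eq_norm_sq]; simp_all [sph]
  have hxv : ⟪x, v⟫ = 0 := by rw [real_inner_comm]; exact hvx
  set s := Real.sin (θ / 2) with hs
  set c := Real.cos (θ / 2) with hc
  have hsc : s ^ 2 + c ^ 2 = 1 := Real.sin_sq_add_cos_sq _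
  have hcos : Real.cos θ = 1 - 2 * s ^ 2 := by
    rw [← mul_div_cancel₀ θ (two_ne_zero' ℝ), Real.cos_two_mul]
    linear_combination 2 * hsc
  have hsin : Real.sin θ = 2 * s * c := by
    rw [← mul_div_cancel₀ θ (two_ne_zero' ℝ), Real.sin_two_mul]
  have hu : ‖s • x - c • v‖ ^ 2 = 1 := by
    rw [← real_inner_self_eq_norm_sq]
    simp only [inner_sub_left, inner_sub_right, real_inner_smul_left, real_inner_smul_right,
      hxx, hvv, hvx, hxv]
    linear_combination hsc
  have hux : ⟪s • x - c • v, x⟫ = s := by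
    rw [inner_sub_left, real_inner_smul_left, real_inner_smul_left, hxx, hvx]; ring
  have huv : ⟪s • x - c • v, v⟫ = -c := by
    rw [inner_sub_left, real_inner_smul_left, real_inner_smul_left, hvv, hxv]; ring
  refine ⟨house (s • x - c • v) 0, ?_⟩
  rw [house_apply, house_apply, sub_zero, hux, huv, hu, Tmap, hcos, hsin]
  ext1
  · simp only; module
  · simp only
    rw [show (1 - 2 * s ^ 2 : ℝ) = 2 * c ^ 2 - 1 by linear_combination (-2) * hsc]
    module

/-- `T_θ` commutes with the diagonal action of the orthogonal group. -/
theorem isometry_Tmap {d : ℕ} (θ : ℝ) (g : E d ≃ₗᵢ[ℝ] E d) (x v : E d) :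
    Tmap θ (g x) (g v) = (g (Tmap θ x v).1, g (Tmap θ x v).2) := by
  simp [Tmap]

theorem measurable_Tmap {d : ℕ} (θ : ℝ) : Measurable fun p : E d × E d => Tmap θ p.1 p.2 := by
  unfold Tmap
  fun_prop

/-- The orthogonal group of `ℝ^d`, with the operator norm topology. -/
abbrev orthGroup (d : ℕ) : Type := unitary (E d →L[ℝ] E d)

instance continuousStar_endomorphisms (d : ℕ) : ContinuousStar (E d →L[ℝ] E d) :=
  ⟨(ContinuousLinearMap.adjoint (𝕜 := ℝ) (E := E d) (F := E d)).continuous⟩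

instance compactSpace_orthGroup (d : ℕ) : CompactSpace (orthGroup d) := by
  have : ProperSpace (E d →L[ℝ] E d) := FiniteDimensional.proper ℝ _
  refine isCompact_iff_compactSpace.mp
    ((isCompact_closedBall (0 : E d →L[ℝ] E d) 1).of_isClosed_subset isClosed_unitary ?_)
  intro u hu
  rw [mem_closedBall_zero_iff]
  refine ContinuousLinearMap.opNorm_le_bound _ zero_le_one fun x => ?_
  have h := (Unitary.linearIsometryEquiv (⟨u, hu⟩ : orthGroup d)).norm_map x
  rw [one_mul]
  exact h.le

/-- Averaging over a Haar measure of the orthogonal group: `f` and `f ∘ T_θ` have the same average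
over the orbit of every orthonormal pair. -/
theorem lintegral_liouville_Tmap {d : ℕ} (hd : 2 ≤ d) (θ : ℝ) {f : E d × E d → ℝ≥0∞}
    (hf : Measurable f) :
    ∫⁻ p, f (Tmap θ p.1 p.2) ∂liouville d = ∫⁻ p, f p ∂liouville d := by
  have := isFiniteMeasure_liouville hd
  let _ : MeasurableSpace (orthGroup d) := borel _
  have : BorelSpace (orthGroup d) := ⟨rfl⟩
  let ν : Measure (orthGroup d) := Measure.haar
  let a (g : orthGroup d) : E d ≃ₗᵢ[ℝ] E d := Unitary.linearIsometryEquiv g⁻¹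
  -- the diagonal action `(g, p) ↦ g⁻¹ p`
  let b (q : orthGroup d × (E d × E d)) : E d × E d := (a q.1 q.2.1, a q.1 q.2.2)
  have hb : Measurable b := by
    have hc : Continuous fun q : orthGroup d × (E d × E d) =>
        ((q.1⁻¹ : orthGroup d) : E d →L[ℝ] E d) :=
      continuous_subtype_val.comp continuous_fst.inv
    exact ((hc.clm_apply (continuous_fst.comp continuous_snd)).prodMk
      (hc.clm_apply (continuous_snd.comp continuous_snd))).measurable
  -- Tonelli's theorem and invariance of `L` under each `g⁻¹`
  have avg : ∀ h : E d × E d → ℝ≥0∞, Measurable h →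
      ∫⁻ p, (∫⁻ g, h (b (g, p)) ∂ν) ∂liouville d = (∫⁻ p, h p ∂liouville d) * ν Set.univ := by
    intro h hh
    rw [lintegral_lintegral_swap (f := fun p g => h (b (g, p)))
      ((hh.comp hb).comp measurable_swap).aemeasurable]
    have : ∀ g, ∫⁻ p, h (b (g, p)) ∂liouville d = ∫⁻ p, h p ∂liouville d := fun g =>
      lintegral_liouville_isometry hd (a g) hh
    simp only [this, lintegral_const]
  have hA {h : E d × E d → ℝ≥0∞} (hh : Measurable h) :
      Measurable fun p => ∫⁻ g, h (b (g, p)) ∂ν :=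
    (hh.comp hb).lintegral_prod_left'
  have hfT : Measurable fun p : E d × E d => f (Tmap θ p.1 p.2) := hf.comp (measurable_Tmap θ)
  have key : ∫⁻ p, (∫⁻ g, f (Tmap θ (b (g, p)).1 (b (g, p)).2) ∂ν) ∂liouville d =
      ∫⁻ p, (∫⁻ g, f (b (g, p)) ∂ν) ∂liouville d := by
    rw [lintegral_liouville hd (hA hfT), lintegral_liouville hd (hA hf)]
    refine setLIntegral_congr_fun (measurableSet_sph d) fun x hx => ?_
    refine setLIntegral_congr_fun (measurableSet_subsph d x) fun v hv => ?_
    obtain ⟨k, hk⟩ := exists_isometry_eq_Tmap θ hx hv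
    -- `T_θ (g⁻¹ p) = g⁻¹ (k p) = (k⁻¹ g)⁻¹ p`, so left invariance of `ν` absorbs `k`
    set κ : orthGroup d := Unitary.linearIsometryEquiv.symm k with hκ
    have hk' : Unitary.linearIsometryEquiv κ = k := by simp [hκ]
    have hT : ∀ g, Tmap θ (b (g, (x, v))).1 (b (g, (x, v))).2 = b (κ⁻¹ * g, (x, v)) := by
      intro g
      simp only [b]
      rw [isometry_Tmap, hk]
      simp only [a, mul_inv_rev, inv_inv, map_mul, hk']
      rfl
    simp only [hT]
    exact lintegral_mul_left_eq_self (fun g => f (b (g, (x, v)))) κ⁻¹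
  rw [avg _ hfT, avg _ hf] at key
  refine (ENNReal.mul_left_inj ?_ ?_).mp key
  · exact (isOpen_univ.measure_pos ν Set.univ_nonempty).ne'
  · exact isCompact_univ.measure_lt_top.ne

theorem measurePreserving_Tmap {d : ℕ} (hd : 2 ≤ d) (θ : ℝ) :
    MeasurePreserving (fun p : E d × E d => Tmap θ p.1 p.2) (liouville d) (liouville d) := by
  refine ⟨measurable_Tmap θ, Measure.ext_of_lintegral _ fun f hf => ?_⟩
  rw [lintegral_map hf (measurable_Tmap θ), lintegral_liouville_Tmap hd θ hf]

/-- the Liouville measure is invariant under `T_θ`: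
for `F` integrable w.r.t. the Liouville measure,
`∫∫ F(x,v) μ_x(dv) σ_{d-1}(dx) = ∫∫ F(T_θ(x,v)) μ_x(dv) σ_{d-1}(dx)`. -/
theorem stmt4 {d : ℕ} (hd : 3 ≤ d) (F : E d × E d → ℝ)
    (hF : Integrable F (liouville d)) (θ : ℝ) :
    ∫ x in sph d, (∫ v in subsph d x, F (x, v) ∂μH[(d:ℝ) - 2]) ∂μH[(d:ℝ) - 1] =
      ∫ x in sph d, (∫ v in subsph d x, F (Tmap θ x v) ∂μH[(d:ℝ) - 2]) ∂μH[(d:ℝ) - 1] := by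
  have hd' : 2 ≤ d := by omega
  have hT := measurePreserving_Tmap hd' θ
  have h1 := integral_liouville hd' hF
  have h2 := integral_liouville hd' (hT.integrable_comp_of_integrable hF)
  refine h1.symm.trans (Eq.trans ?_ h2)
  have hF' : AEStronglyMeasurable F
      ((liouville d).map fun p : E d × E d => Tmap θ p.1 p.2) := by
    rw [hT.map_eq]; exact hF.aestronglyMeasurable
  have h3 := integral_map hT.measurable.aemeasurable hF'
  rwa [hT.map_eq] at h3

end
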